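/- Assume m, n ≥ 7. Then the QAP4 inequality ∑_{r=1}^m Y((i_r,j_r),(i_r,j_r)) − ∑_{1≤r<s≤m} Y((i_r,j_r),(i_s,j_s)) ≤ 1 is facet-defining for the QAP-polytope QAP_n: it is valid for all points of QAP_n, and the dimension of the affine span (in the real vector space of n²×n² matrices) of the set {P^[2]_τ : τ ∈ S_1 ∪ S_2} of vertices satisfying it with equality is exactly one less than the dimension of the affine span of the set {P^[2]_σ : σ a permutation of [n]} of all vertices of QAP_n. -/

import Mathlib

open Finset

/-- The matrix `P^[2]_σ`: entry at `((i,j),(k,l))` is `P_σ(i,j) · P_σ(k,l)`, where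
`P_σ` is the permutation matrix of `σ`. -/
noncomputable def permMat2 {n : ℕ} (σ : Equiv.Perm (Fin n)) :
    (Fin n × Fin n) → (Fin n × Fin n) → ℝ :=
  fun p q => (if σ p.1 = p.2 then (1 : ℝ) else 0) * (if σ q.1 = q.2 then (1 : ℝ) else 0)


/-- `Sk i j k`: the set of permutations `σ` such that `σ (i r) = j r` holds for exactly `k`
indices `r`. -/
def Sk {n m : ℕ} (i j : Fin m → Fin n) (k : ℕ) : Set (Equiv.Perm (Fin n)) :=
  {σ | (Finset.univ.filter (fun r : Fin m => σ (i r) = j r)).card = k}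

/-!
The left-hand side of the inequality takes the value `1 - (k - 1) * (k - 2) / 2` at a permutation
of level `k`, i.e. with `k` hits `σ (i r) = j r`. Hence it is at most `1`, with equality on levels 1
and 2.

For the dimension it suffices that all vertices lie in the affine span of the face together with one
vertex of level 3. The entries of `permMat2 σ` are quadratic in the permutation matrix, so their
third differences along three disjoint transpositions vanish. After left multiplication by a
permutation, hits become fixed points in a set of marked points, and the claim reads: a function on
permutations with vanishing third differences that is zero on levels 1 and 2 and at one permutation
of level 3 is zero. It is constant on permutations with the same three marked fixed points, because
these are connected by transpositions and each transposition can be completed to a cube whose other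
vertices have level 1 or 2. A cube based at level 4 then allows one of the three fixed points to be
exchanged, so level 3 vanishes. From a higher level, a cube leads down to lower positive levels, and
from level 0, a cube leads up to positive levels.
-/

theorem sum_mul_sum_self_eq {ι R : Type*} [Fintype ι] [LinearOrder ι] [CommSemiring R]
    (u : ι → R) : (∑ r, u r) * ∑ r, u r =
      ∑ r, u r * u r + 2 * ∑ r, ∑ s, if r < s then u r * u s else 0 := by
  have hsplit (r s : ι) : u r * u s = (if r = s then u r * u r else 0) +
      ((if r < s then u r * u s else 0) + if s < r then u s * u r else 0) := by
    rcases lt_trichotomy r s with h | rfl | h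
    · simp [h, h.ne, h.not_gt]
    · simp
    · simp [h, h.ne', h.not_gt, mul_comm]
  have hcomm : ∑ r, ∑ s, (if s < r then u s * u r else 0) =
      ∑ r, ∑ s, if r < s then u r * u s else 0 := sum_comm
  rw [sum_mul_sum, sum_congr rfl fun r _ ↦ sum_congr rfl fun s _ ↦ hsplit r s]
  simp only [sum_add_distrib, sum_ite_eq, mem_univ, if_true, hcomm, two_mul]

theorem finrank_direction_affineSpan_insert {k V P : Type*} [DivisionRing k] [AddCommGroup V]
    [Module k V] [AddTorsor V P] [Module.Finite k V] {S : Set P} (hS : S.Nonempty) {p : P}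
    (hp : p ∉ affineSpan k S) :
    Module.finrank k (affineSpan k (insert p S)).direction =
      Module.finrank k (affineSpan k S).direction + 1 := by
  obtain ⟨q, hq⟩ := hS
  have hq := subset_affineSpan k S hq
  rw [← affineSpan_insert_affineSpan, AffineSubspace.direction_affineSpan_insert hq, sup_comm,
    Submodule.finrank_sup_span_singleton]
  rwa [AffineSubspace.vsub_right_mem_direction_iff_mem hq]

section QuadraticFunctions

open Equiv

variable {α V W : Type*} [AddCommGroup V] [AddCommGroup W]

/-- Functions on permutations whose third differences along pairwise disjoint permutations all
vanish (the negative terms are moved to the other side). Polynomials of degree at most two in the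
entries of the permutation matrix have this property. -/
def IsQuadratic (f : Perm α → V) : Prop :=
  ∀ σ s t u : Perm α, s.Disjoint t → s.Disjoint u → t.Disjoint u →
    f σ + f (σ * s * t) + f (σ * s * u) + f (σ * t * u) =
      f (σ * s) + f (σ * t) + f (σ * u) + f (σ * s * t * u)

theorem isQuadratic_apply_apply (F : α → α → V) (x y : α) :
    IsQuadratic fun σ : Perm α ↦ F (σ x) (σ y) := by
  intro σ s t u hst hsu htu
  -- Each of the two points is moved by at most one of `s`, `t`, `u`, so one of these moves neither.
  have h : (s x = x ∧ s y = y) ∨ (t x = x ∧ t y = y) ∨ (u x = x ∧ u y = y) := by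
    have := hst x; have := hst y; have := hsu x; have := hsu y; have := htu x; have := htu y
    tauto
  rcases h with ⟨hx, hy⟩ | ⟨hx, hy⟩ | ⟨hx, hy⟩
  · simp only [mul_assoc, hst.commute.eq, hsu.commute.eq]
    simp only [Perm.mul_apply, hx, hy]
  · simp only [mul_assoc, htu.commute.eq]
    simp only [Perm.mul_apply, hx, hy]
    abel
  · simp only [Perm.mul_apply, hx, hy]
    abel

namespace IsQuadratic

variable {f : Perm α → V}

theorem map (hf : IsQuadratic f) (φ : V →+ W) : IsQuadratic fun σ ↦ φ (f σ) := by
  intro σ s t u hst hsu htu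
  simpa only [map_add] using congrArg φ (hf σ s t u hst hsu htu)

theorem mul_left (hf : IsQuadratic f) (π : Perm α) : IsQuadratic fun σ ↦ f (π * σ) := by
  intro σ s t u hst hsu htu
  simpa only [mul_assoc] using hf (π * σ) s t u hst hsu htu

theorem sub_const (hf : IsQuadratic f) (v : V) : IsQuadratic fun σ ↦ f σ - v := by
  intro σ s t u hst hsu htu
  have h := congrArg (· - 4 • v) (hf σ s t u hst hsu htu)
  convert h using 1 <;> simp only <;> abel

theorem swap_swap_swap [DecidableEq α] (hf : IsQuadratic f) (σ : Perm α) {a b c d e g : α}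
    (h : [a, b, c, d, e, g].Nodup) :
    f σ + f (σ * swap a b * swap c d) + f (σ * swap a b * swap e g) +
        f (σ * swap c d * swap e g) =
      f (σ * swap a b) + f (σ * swap c d) + f (σ * swap e g) +
        f (σ * swap a b * swap c d * swap e g) :=
  hf σ _ _ _ (Perm.disjoint_swap_swap (h.sublist (by simp)))
    (Perm.disjoint_swap_swap (h.sublist (by simp)))
    (Perm.disjoint_swap_swap (h.sublist (by simp)))

end IsQuadratic

end QuadraticFunctions

section MarkedFixedPoints

open Equiv

variable {α : Type*} [DecidableEq α] {M : Finset α} {τ s : Perm α} {a b c d e g x : α}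

/-- The fixed points of `τ` in the set `M` of marked points. -/
def fixedIn (M : Finset α) (τ : Perm α) : Finset α := {x ∈ M | τ x = x}

@[simp]
theorem mem_fixedIn : x ∈ fixedIn M τ ↔ x ∈ M ∧ τ x = x := mem_filter

theorem fixedIn_mul_eq_self (h : ∀ x ∈ M, s x ≠ x → τ x ≠ x ∧ τ (s x) ≠ x) :
    fixedIn M (τ * s) = fixedIn M τ := by
  ext x
  by_cases hx : s x = x
  · simp [hx]
  · have := h x
    simp only [mem_fixedIn, Perm.mul_apply]
    tauto

theorem fixedIn_mul_swap (ha : a ∈ fixedIn M τ) (hab : a ≠ b) :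
    fixedIn M (τ * swap a b) = fixedIn M τ \ {a, b} := by
  have hb : τ b ≠ a := fun h ↦ hab (τ.injective ((mem_fixedIn.1 ha).2.trans h.symm))
  ext x
  simp only [mem_fixedIn, mem_sdiff, mem_insert, mem_singleton, Perm.mul_apply] at *
  rcases eq_or_ne x a with rfl | hxa
  · simp [hb]
  rcases eq_or_ne x b with rfl | hxb
  · simp [ha.2, hab]
  · simp [swap_apply_of_ne_of_ne hxa hxb, hxa, hxb]

theorem fixedIn_mul_swap_of_notMem (ha : a ∈ fixedIn M τ) (hb : b ∉ fixedIn M τ) :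
    fixedIn M (τ * swap a b) = (fixedIn M τ).erase a := by
  rw [fixedIn_mul_swap ha (ne_of_mem_of_not_mem ha hb)]
  grind

theorem fixedIn_mul_swap_mul_swap (ha : a ∈ fixedIn M τ) (hc : c ∈ fixedIn M τ)
    (h : [a, b, c, d].Nodup) :
    fixedIn M (τ * swap a b * swap c d) = fixedIn M τ \ {a, b, c, d} := by
  have hab := fixedIn_mul_swap (b := b) ha (by grind)
  rw [fixedIn_mul_swap, hab] <;> grind

theorem fixedIn_mul_swap_mul_swap_mul_swap (ha : a ∈ fixedIn M τ) (hc : c ∈ fixedIn M τ)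
    (he : e ∈ fixedIn M τ) (h : [a, b, c, d, e, g].Nodup) :
    fixedIn M (τ * swap a b * swap c d * swap e g) = fixedIn M τ \ {a, b, c, d, e, g} := by
  have habcd := fixedIn_mul_swap_mul_swap (b := b) (d := d) ha hc (h.sublist (by simp))
  simp only [List.nodup_cons, List.mem_cons, not_or] at h
  rw [fixedIn_mul_swap, habcd] <;> grind

theorem exists_fixedIn_eq [Fintype α] {F : Finset α} (hF : F ⊆ M)
    (hcard : #F + 2 ≤ Fintype.card α) : ∃ τ : Perm α, fixedIn M τ = F := by
  obtain ⟨τ, hcycle, hsupp⟩ := exists_cycleOn Fᶜ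
  have hnontrivial : (Fᶜ : Finset α).Nontrivial := by
    rw [← one_lt_card_iff_nontrivial, card_compl]
    omega
  refine ⟨τ, ?_⟩
  ext x
  rw [mem_fixedIn]
  constructor
  · rintro ⟨-, hx⟩
    by_contra hxF
    exact hcycle.apply_ne hnontrivial (by simpa using hxF) hx
  · refine fun hx ↦ ⟨hF hx, Perm.notMem_support.1 fun hx' ↦ ?_⟩
    exact mem_compl.1 (hsupp hx') hx

end MarkedFixedPoints

section SwapSteps

open Equiv Relation

theorem inverse_threeCycle_of_apply_apply_eq {α : Type*} {τ τ' : Perm α} {a : α}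
    (h : ∀ x, τ x ≠ τ' x → τ (τ x) = τ' x)
    (h' : ∀ x, τ x ≠ τ' x → τ' (τ' x) = τ x) (ha : τ a ≠ τ' a) :
    a ≠ τ a ∧ a ≠ τ (τ a) ∧ τ (τ (τ a)) = a ∧ τ' (τ a) = a ∧ τ' (τ (τ a)) = τ a := by
  have hτ' := h a ha
  have hne : a ≠ τ a := by grind
  have hb : τ (τ a) ≠ τ' (τ a) := by grind [τ'.injective.eq_iff]
  have hba : τ' (τ a) = a := τ'.injective (by rw [h' _ hb, hτ'])
  grind

variable {α : Type*} [DecidableEq α] {M : Finset α} {τ τ' s : Perm α} {a b c w : α}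

/-- One permutation arises from the other by exchanging two values, without changing the set of
marked fixed points. Chains of such steps connect permutations with the same marked fixed points. -/
def SwapStep (M : Finset α) (τ τ' : Perm α) : Prop :=
  ∃ a b, τ' = τ * swap a b ∧ fixedIn M τ' = fixedIn M τ

theorem SwapStep.symm (h : SwapStep M τ τ') : SwapStep M τ' τ := by
  obtain ⟨a, b, rfl, h⟩ := h
  exact ⟨a, b, by simp [mul_assoc], h.symm⟩

theorem fixedIn_eq_of_reflTransGen_swapStep (h : ReflTransGen (SwapStep M) τ τ') :
    fixedIn M τ' = fixedIn M τ := by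
  induction h with
  | refl => rfl
  | tail _ hstep ih =>
    obtain ⟨_, _, _, hfix⟩ := hstep
    exact hfix.trans ih

-- The fourth point `w` is inserted into the cycle, which is then reversed around it.
theorem reflTransGen_swapStep_of_threeCycle (hab : a ≠ b) (hac : a ≠ c) (hbc : b ≠ c)
    (ha : τ a = b) (hb : τ b = c) (hc : τ c = a) (hwa : w ≠ a) (hwb : w ≠ b) (hwc : w ≠ c)
    (hw : w ∉ fixedIn M τ) :
    ReflTransGen (SwapStep M) τ (τ * swap a b * swap b c) := by
  have hτw : τ w ≠ a := fun h ↦ hwc (τ.injective (h.trans hc.symm))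
  have h₁ : fixedIn M (τ * swap a w) = fixedIn M τ := by
    refine fixedIn_mul_eq_self fun x hxM hx ↦ ?_
    grind [mem_fixedIn]
  have h₂ : fixedIn M (τ * (swap a w * swap c w)) = fixedIn M τ := by
    refine fixedIn_mul_eq_self fun x hxM hx ↦ ?_
    grind [mem_fixedIn, Perm.mul_apply]
  have h₃ : fixedIn M (τ * (swap a w * swap c w * swap b w)) = fixedIn M τ := by
    refine fixedIn_mul_eq_self fun x hxM hx ↦ ?_
    grind [mem_fixedIn, Perm.mul_apply]
  have h₄ : fixedIn M (τ * (swap a b * swap b c)) = fixedIn M τ := by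
    refine fixedIn_mul_eq_self fun x _ hx ↦ ?_
    grind [mem_fixedIn, Perm.mul_apply]
  have hprod : swap a w * swap c w * swap b w * swap a w = swap a b * swap b c := by
    ext x
    grind [Perm.mul_apply]
  simp only [← mul_assoc] at h₂ h₃ h₄ hprod
  have : τ * swap a b * swap b c = τ * swap a w * swap c w * swap b w * swap a w := by
    simp only [mul_assoc] at hprod ⊢
    rw [hprod]
  exact ((((ReflTransGen.refl.tail ⟨a, w, rfl, h₁⟩).tail ⟨c, w, rfl, h₂.trans h₁.symm⟩).tail
    ⟨b, w, rfl, h₃.trans h₂.symm⟩).tail ⟨a, w, this, h₄.trans h₃.symm⟩)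

variable [Fintype α]

theorem hammingDist_mul_lt (hs : ∀ x, s x ≠ x → τ x ≠ τ' x) (ha : τ a ≠ τ' a)
    (hsa : τ (s a) = τ' a) : hammingDist (τ * s) τ' < hammingDist τ τ' := by
  refine card_lt_card ((ssubset_iff_of_subset fun x hx ↦ ?_).2
    ⟨a, mem_filter_univ a |>.2 ha, fun h ↦ (mem_filter_univ a).1 h hsa⟩)
  rw [mem_filter_univ] at hx ⊢
  by_cases hx' : s x = x
  · rwa [Perm.mul_apply, hx'] at hx
  · exact hs x hx'

-- Here `b` is the preimage under `τ` of the value that `a` should take; exchanging the values at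
-- `a` and `b` could only create the fixed point `b`.
theorem exists_swapStep_hammingDist_lt (hfix : fixedIn M τ = fixedIn M τ') (ha : τ a ≠ τ' a)
    (hblock : τ (τ a) ≠ τ' a ∨ τ a ∉ M) :
    ∃ ρ, SwapStep M τ ρ ∧ hammingDist ρ τ' < hammingDist τ τ' := by
  obtain ⟨b, hb⟩ := τ.surjective (τ' a)
  have hab : a ≠ b := by rintro rfl; exact ha hb
  have hb' : τ b ≠ τ' b := fun h ↦ hab (τ'.injective (hb.symm.trans h))
  have hagree : ∀ x ∈ M, τ x = x ↔ τ' x = x := fun x hx ↦ by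
    simpa [hx] using Finset.ext_iff.1 hfix x
  have hdis : ∀ x, swap a b x ≠ x → τ x ≠ τ' x := by grind
  refine ⟨τ * swap a b, ⟨a, b, rfl, fixedIn_mul_eq_self fun x hxM hx ↦ ?_⟩,
    hammingDist_mul_lt hdis ha (by simpa using hb)⟩
  grind

theorem exists_reflTransGen_swapStep_hammingDist_lt
    (hcard : #(fixedIn M τ) + 4 ≤ Fintype.card α) (h : ∀ x, τ x ≠ τ' x → τ (τ x) = τ' x)
    (h' : ∀ x, τ x ≠ τ' x → τ' (τ' x) = τ x) (ha : τ a ≠ τ' a) :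
    ∃ ρ, ReflTransGen (SwapStep M) τ ρ ∧ hammingDist ρ τ' < hammingDist τ τ' := by
  obtain ⟨hab, hac, hca, hba', hcb'⟩ := inverse_threeCycle_of_apply_apply_eq h h' ha
  have hbc : τ a ≠ τ (τ a) := τ.injective.ne hab
  obtain ⟨w, hw⟩ : ∃ w, w ∉ fixedIn M τ ∪ {a, τ a, τ (τ a)} := by
    by_contra! hall
    have := card_le_card fun x (_ : x ∈ univ) ↦ hall x
    have := card_union_le (fixedIn M τ) {a, τ a, τ (τ a)}
    have := card_le_three (a := a) (b := τ a) (c := τ (τ a))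
    rw [card_univ] at *
    omega
  simp only [mem_union, mem_insert, mem_singleton, not_or] at hw
  refine ⟨_, reflTransGen_swapStep_of_threeCycle hab hac hbc rfl rfl hca hw.2.1 hw.2.2.1 hw.2.2.2
    hw.1, ?_⟩
  rw [mul_assoc]
  refine hammingDist_mul_lt (a := a) (fun x hx ↦ ?_) ha ?_
  · grind [Perm.mul_apply]
  · grind [Perm.mul_apply]

theorem reflTransGen_swapStep (hfix : fixedIn M τ = fixedIn M τ')
    (hcard : #(fixedIn M τ) + 4 ≤ Fintype.card α) : ReflTransGen (SwapStep M) τ τ' := by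
  induction hN : hammingDist τ τ' using Nat.strong_induction_on generalizing τ τ' with
  | _ N ih =>
  subst hN
  have left {ρ} (h : ReflTransGen (SwapStep M) τ ρ) (hlt : hammingDist ρ τ' < hammingDist τ τ') :
      ReflTransGen (SwapStep M) τ τ' := by
    have hρ := fixedIn_eq_of_reflTransGen_swapStep h
    exact h.trans (ih _ hlt (hρ.trans hfix) (hρ ▸ hcard) rfl)
  have right {ρ} (h : SwapStep M τ' ρ) (hlt : hammingDist ρ τ < hammingDist τ' τ) :
      ReflTransGen (SwapStep M) τ τ' := by
    have hρ := fixedIn_eq_of_reflTransGen_swapStep (.single h)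
    rw [hammingDist_comm, hammingDist_comm (τ' : α → α)] at hlt
    exact (ih _ hlt (hfix.trans hρ.symm) hcard rfl).tail h.symm
  by_cases hblock : ∃ a, τ a ≠ τ' a ∧ (τ (τ a) ≠ τ' a ∨ τ a ∉ M)
  · obtain ⟨a, ha, hblock⟩ := hblock
    obtain ⟨ρ, hρ, hlt⟩ := exists_swapStep_hammingDist_lt hfix ha hblock
    exact left (.single hρ) hlt
  by_cases hblock' : ∃ a, τ' a ≠ τ a ∧ (τ' (τ' a) ≠ τ a ∨ τ' a ∉ M)
  · obtain ⟨a, ha, hblock'⟩ := hblock'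
    obtain ⟨ρ, hρ, hlt⟩ := exists_swapStep_hammingDist_lt hfix.symm ha hblock'
    exact right hρ hlt
  push Not at hblock hblock'
  by_cases heq : ∃ a, τ a ≠ τ' a
  · obtain ⟨a, ha⟩ := heq
    obtain ⟨ρ, hρ, hlt⟩ := exists_reflTransGen_swapStep_hammingDist_lt hcard
      (fun x hx ↦ (hblock x hx).1) (fun x hx ↦ (hblock' x hx.symm).1) ha
    exact left hρ hlt
  · push Not at heq
    rw [Equiv.ext heq]

end SwapSteps

section LowLevels

open Equiv

variable {α V : Type*} [DecidableEq α] [AddCommGroup V] {M F : Finset α}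
  {f : Perm α → V} {τ τ' : Perm α} {p q r s x y z : α}

namespace IsQuadratic

theorem apply_eq_add_add_of_card_fixedIn_eq_four (hf : IsQuadratic f)
    (h1 : ∀ τ, #(fixedIn M τ) = 1 → f τ = 0) (h2 : ∀ τ, #(fixedIn M τ) = 2 → f τ = 0)
    (h4 : #(fixedIn M τ) = 4) (hp : p ∈ fixedIn M τ) (hq : q ∈ fixedIn M τ) (hr : r ∈ fixedIn M τ)
    (hx : x ∉ fixedIn M τ) (hy : y ∉ fixedIn M τ) (hz : z ∉ fixedIn M τ)
    (h : [p, x, q, y, r, z].Nodup) :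
    f τ = f (τ * swap p x) + f (τ * swap q y) + f (τ * swap r z) := by
  have key := hf.swap_swap_swap τ h
  rw [h2 (τ * swap p x * swap q y), h2 (τ * swap p x * swap r z), h2 (τ * swap q y * swap r z),
    h1 (τ * swap p x * swap q y * swap r z)] at key
  · simpa using key
  · rw [fixedIn_mul_swap_mul_swap_mul_swap hp hq hr h]
    have : fixedIn M τ \ {p, x, q, y, r, z} = (((fixedIn M τ).erase p).erase q).erase r := by
      grind (splits := 20)
    grind (splits := 20)
  all_goals
    rw [fixedIn_mul_swap_mul_swap (by assumption) (by assumption) (h.sublist (by simp))]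
    simp only [List.nodup_cons, List.mem_cons, not_or] at h
    grind

variable [Fintype α]

-- Besides `f τ` and `f τ'`, the third difference along `swap a b` and two swaps that each destroy a
-- marked fixed point has only terms with one or two marked fixed points.
theorem apply_eq_of_swapStep (hf : IsQuadratic f) (h1 : ∀ τ, #(fixedIn M τ) = 1 → f τ = 0)
    (h2 : ∀ τ, #(fixedIn M τ) = 2 → f τ = 0) (hcard : 7 ≤ Fintype.card α)
    (h3 : #(fixedIn M τ) = 3) (h : SwapStep M τ τ') : f τ = f τ' := by
  obtain ⟨a, b, rfl, hfix⟩ := h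
  rcases eq_or_ne a b with rfl | hab
  · rw [swap_self, ← Perm.one_def, mul_one]
  obtain ⟨p, q, r, hpq, hpr, hqr, hT⟩ := card_eq_three.1 h3
  have hne : ∀ x ∈ fixedIn M τ, x ≠ a ∧ x ≠ b := fun x hx ↦ by
    have hx' := hfix ▸ hx
    rw [mem_fixedIn] at hx hx'
    have hswap : swap a b x = x := τ.injective (hx'.2.trans hx.2.symm)
    grind
  obtain ⟨y, hy, z, hz, hyz⟩ := one_lt_card.1 (show 1 < #({p, q, r, a, b} : Finset α)ᶜ by
    have := card_le_five (a := p) (b := q) (c := r) (d := a) (e := b)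
    rw [card_compl]
    omega)
  simp only [mem_compl, mem_insert, mem_singleton, not_or] at hy hz
  have key := hf.swap_swap_swap τ (a := a) (b := b) (c := q) (d := y) (e := r) (g := z) (by
    grind (splits := 20))
  have hlevel : ∀ ρ, fixedIn M ρ = fixedIn M τ →
      f (ρ * swap q y) = 0 ∧ f (ρ * swap r z) = 0 ∧ f (ρ * swap q y * swap r z) = 0 := by
    intro ρ hρ
    rw [hT] at hρ
    refine ⟨h2 _ ?_, h2 _ ?_, h1 _ ?_⟩
    · rw [fixedIn_mul_swap_of_notMem, hρ] <;> grind
    · rw [fixedIn_mul_swap_of_notMem, hρ] <;> grind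
    · rw [fixedIn_mul_swap_mul_swap, hρ] <;> grind
  obtain ⟨hq, hr, hqr⟩ := hlevel τ rfl
  obtain ⟨hq', hr', hqr'⟩ := hlevel _ hfix
  simpa [hq, hr, hqr, hq', hr', hqr'] using key

theorem apply_eq_of_fixedIn_eq (hf : IsQuadratic f) (h1 : ∀ τ, #(fixedIn M τ) = 1 → f τ = 0)
    (h2 : ∀ τ, #(fixedIn M τ) = 2 → f τ = 0) (hcard : 7 ≤ Fintype.card α)
    (h3 : #(fixedIn M τ) = 3) (hfix : fixedIn M τ = fixedIn M τ') : f τ = f τ' := by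
  have hpath := reflTransGen_swapStep hfix (by omega)
  induction hpath with
  | refl => rfl
  | tail hpath hstep ih =>
    have hρ := fixedIn_eq_of_reflTransGen_swapStep hpath
    exact (ih hρ.symm).trans (hf.apply_eq_of_swapStep h1 h2 hcard (hρ ▸ h3) hstep)

-- Both values occur in decompositions of `f ρ`, where `ρ` has the four marked fixed points `F`, and
-- these decompositions have their other two terms in common.
theorem apply_eq_of_fixedIn_eq_erase (hf : IsQuadratic f)
    (h1 : ∀ τ, #(fixedIn M τ) = 1 → f τ = 0) (h2 : ∀ τ, #(fixedIn M τ) = 2 → f τ = 0)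
    (hcard : 7 ≤ Fintype.card α) (hF : F ⊆ M) (h4 : #F = 4) (hp : p ∈ F) (hs : s ∈ F)
    (hτ : fixedIn M τ = F.erase p) (hτ' : fixedIn M τ' = F.erase s) : f τ = f τ' := by
  rcases eq_or_ne p s with rfl | hps
  · exact hf.apply_eq_of_fixedIn_eq h1 h2 hcard (by grind) (hτ.trans hτ'.symm)
  obtain ⟨ρ, rfl⟩ := exists_fixedIn_eq hF (by omega)
  obtain ⟨q, hq, r, hr, hqr⟩ := one_lt_card.1
    (show 1 < #(((fixedIn M ρ).erase p).erase s) by grind)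
  obtain ⟨x, hx, y, hy, z, hz, hxy, hxz, hyz⟩ := two_lt_card.1
    (show 2 < #(fixedIn M ρ)ᶜ by rw [card_compl]; omega)
  simp only [mem_erase, mem_compl] at hq hr hx hy hz
  have hsum {t} (ht : t ∈ fixedIn M ρ) (htq : t ≠ q) (htr : t ≠ r) :=
    hf.apply_eq_add_add_of_card_fixedIn_eq_four h1 h2 h4 ht hq.2.2 hr.2.2 hx hy hz
      (by grind (splits := 20))
  have hpx : f (ρ * swap p x) = f τ :=
    hf.apply_eq_of_fixedIn_eq h1 h2 hcard (by rw [fixedIn_mul_swap_of_notMem] <;> grind)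
      (by rw [fixedIn_mul_swap_of_notMem hp hx, hτ])
  have hsx : f (ρ * swap s x) = f τ' :=
    hf.apply_eq_of_fixedIn_eq h1 h2 hcard (by rw [fixedIn_mul_swap_of_notMem] <;> grind)
      (by rw [fixedIn_mul_swap_of_notMem hs hx, hτ'])
  have := (hsum hp (Ne.symm hq.2.1) (Ne.symm hr.2.1)).symm.trans
    (hsum hs (Ne.symm hq.1) (Ne.symm hr.1))
  simpa [hpx, hsx] using this

theorem apply_eq_of_card_fixedIn_eq_three (hf : IsQuadratic f)
    (h1 : ∀ τ, #(fixedIn M τ) = 1 → f τ = 0) (h2 : ∀ τ, #(fixedIn M τ) = 2 → f τ = 0)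
    (hcard : 7 ≤ Fintype.card α) (h3 : #(fixedIn M τ) = 3) (h3' : #(fixedIn M τ') = 3) :
    f τ = f τ' := by
  induction hN : #(fixedIn M τ' \ fixedIn M τ) generalizing τ with
  | zero =>
    rw [card_eq_zero, sdiff_eq_empty_iff_subset] at hN
    exact hf.apply_eq_of_fixedIn_eq h1 h2 hcard h3 (eq_of_subset_of_card_le hN (by omega)).symm
  | succ N ih =>
    obtain ⟨p, hp⟩ := card_pos.1 (show 0 < #(fixedIn M τ' \ fixedIn M τ) by omega)
    obtain ⟨s, hs⟩ := card_pos.1 (show 0 < #(fixedIn M τ \ fixedIn M τ') by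
      rw [card_sdiff_comm (h3.trans h3'.symm)]
      omega)
    rw [mem_sdiff] at hp hs
    have hFM : insert p (fixedIn M τ) ⊆ M := by grind [mem_fixedIn]
    obtain ⟨ρ, hρ⟩ := exists_fixedIn_eq (M := M) (F := (insert p (fixedIn M τ)).erase s)
      ((erase_subset _ _).trans hFM) (by grind)
    have hτρ : f τ = f ρ := hf.apply_eq_of_fixedIn_eq_erase h1 h2 hcard hFM (by grind)
      (mem_insert_self _ _) (mem_insert_of_mem hs.1) (by grind) hρ
    rw [hτρ]
    refine ih (by grind) ?_
    have : fixedIn M τ' \ fixedIn M ρ = (fixedIn M τ' \ fixedIn M τ).erase p := by grind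
    grind

end IsQuadratic

end LowLevels

section AllLevels

open Equiv

variable {α V : Type*} [DecidableEq α] {M : Finset α} {σ : Perm α}

theorem exists_nodup_of_fixedIn_eq_empty (hM : 7 ≤ #M) (hσ : fixedIn M σ = ∅) :
    ∃ a b c, σ a ∈ M ∧ σ b ∈ M ∧ σ c ∈ M ∧ [a, σ a, b, σ b, c, σ c].Nodup := by
  have hne {x} (hx : σ x ∈ M) : σ x ≠ x := fun h ↦ by
    have : σ x ∈ fixedIn M σ := mem_fixedIn.2 ⟨hx, congrArg σ h⟩
    simp [hσ] at this
  have hpick (S : Finset α) (hS : #S < 7) : ∃ x, σ x ∈ M ∧ σ x ∉ S := by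
    obtain ⟨y, hyM, hyS⟩ := exists_mem_notMem_of_card_lt_card (hS.trans_le hM)
    exact ⟨σ.symm y, by simpa using hyM, by simpa using hyS⟩
  obtain ⟨a, ha, -⟩ := hpick ∅ (by simp)
  obtain ⟨b, hb, hbS⟩ := hpick {a, σ a, σ (σ a)} (card_le_three.trans_lt (by simp))
  obtain ⟨c, hc, hcS⟩ := hpick {a, σ a, σ (σ a), b, σ b, σ (σ b)}
    (card_le_six.trans_lt (by simp))
  refine ⟨a, b, c, ha, hb, hc, ?_⟩
  have := hne ha
  have := hne hb
  have := hne hc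
  simp only [mem_insert, mem_singleton, not_or, σ.injective.eq_iff] at hbS hcS
  simp only [List.nodup_cons, List.mem_cons, not_or, σ.injective.eq_iff]
  grind

variable [AddCommGroup V] {f : Perm α → V} {τ : Perm α}

namespace IsQuadratic

-- Right multiplication by `swap x (σ x)` makes `σ x` a fixed point.
theorem eq_zero_of_fixedIn_eq_empty (hf : IsQuadratic f) (hM : 7 ≤ #M)
    (hne : ∀ τ, (fixedIn M τ).Nonempty → f τ = 0) (hσ : fixedIn M σ = ∅) : f σ = 0 := by
  obtain ⟨a, b, c, ha, hb, hc, h⟩ := exists_nodup_of_fixedIn_eq_empty hM hσ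
  have hzero {x w} (hx : σ x ∈ M) (hw : w (σ x) = x) : f (σ * w) = 0 :=
    hne _ ⟨σ x, mem_fixedIn.2 ⟨hx, congrArg σ hw⟩⟩
  have key := hf.swap_swap_swap σ h
  simp only [List.nodup_cons, List.mem_cons, not_or] at h
  simp only [mul_assoc] at key
  rw [hzero (w := swap a (σ a)) ha, hzero (w := swap b (σ b)) hb, hzero (w := swap c (σ c)) hc,
    hzero (w := swap a (σ a) * swap b (σ b)) ha, hzero (w := swap a (σ a) * swap c (σ c)) ha,
    hzero (w := swap b (σ b) * swap c (σ c)) hb,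
    hzero (w := swap a (σ a) * (swap b (σ b) * swap c (σ c))) ha] at key
  · simpa using key
  all_goals grind [Perm.mul_apply, swap_apply_of_ne_of_ne]

-- Four marked fixed points: one stays fixed throughout, the others start three disjoint swaps, so
-- the seven other terms of the third difference have fewer marked fixed points, but at least one.
theorem apply_eq_zero_of_four_le [Fintype α] (hf : IsQuadratic f) (hcard : 7 ≤ Fintype.card α)
    (h4 : 4 ≤ #(fixedIn M τ))
    (hlower : ∀ ρ, fixedIn M ρ ⊂ fixedIn M τ → (fixedIn M ρ).Nonempty → f ρ = 0) : f τ = 0 := by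
  obtain ⟨U, hU, hUcard⟩ := exists_subset_card_eq h4
  obtain ⟨s, a, c, e, hsa, hsc, hse, hac, hae, hce, rfl⟩ := card_eq_four.1 hUcard
  obtain ⟨b, hb, d, hd, g, hg, hbd, hbg, hdg⟩ := two_lt_card.1
    (show 2 < #({s, a, c, e} : Finset α)ᶜ by rw [card_compl]; omega)
  simp only [insert_subset_iff, singleton_subset_iff] at hU
  simp only [mem_compl, mem_insert, mem_singleton, not_or] at hb hd hg
  obtain ⟨hs, ha, hc, he⟩ := hU
  have hnodup : [a, b, c, d, e, g].Nodup := by grind (splits := 20)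
  have hzero {x ρ T} (hx : x ∈ fixedIn M τ) (hρ : fixedIn M ρ = fixedIn M τ \ T) (hxT : x ∈ T)
      (hsT : s ∉ T) : f ρ = 0 :=
    hlower ρ (hρ ▸ sdiff_lt_left.2 (not_disjoint_iff.2 ⟨x, hxT, hx⟩))
      ⟨s, hρ ▸ mem_sdiff.2 ⟨hs, hsT⟩⟩
  have key := hf.swap_swap_swap τ hnodup
  rw [hzero ha (fixedIn_mul_swap ha (b := b) ?_), hzero hc (fixedIn_mul_swap hc (b := d) ?_),
    hzero he (fixedIn_mul_swap he (b := g) ?_), hzero ha (fixedIn_mul_swap_mul_swap ha hc ?_),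
    hzero ha (fixedIn_mul_swap_mul_swap ha he ?_), hzero hc (fixedIn_mul_swap_mul_swap hc he ?_),
    hzero ha (fixedIn_mul_swap_mul_swap_mul_swap ha hc he hnodup)] at key
  · simpa using key
  all_goals grind (splits := 20)

theorem eq_zero_of_nonempty [Fintype α] (hf : IsQuadratic f)
    (h1 : ∀ τ, #(fixedIn M τ) = 1 → f τ = 0) (h2 : ∀ τ, #(fixedIn M τ) = 2 → f τ = 0)
    (h3 : ∀ τ, #(fixedIn M τ) = 3 → f τ = 0) (hcard : 7 ≤ Fintype.card α)
    (hne : (fixedIn M τ).Nonempty) : f τ = 0 := by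
  induction hk : #(fixedIn M τ) using Nat.strong_induction_on generalizing τ with
  | _ k ih =>
  subst hk
  rcases lt_or_ge #(fixedIn M τ) 4 with hlt | h4
  · have := hne.card_pos
    obtain h | h | h : #(fixedIn M τ) = 1 ∨ #(fixedIn M τ) = 2 ∨ #(fixedIn M τ) = 3 := by omega
    exacts [h1 τ h, h2 τ h, h3 τ h]
  · exact hf.apply_eq_zero_of_four_le hcard h4 fun ρ hρ hne ↦ ih _ (card_lt_card hρ) hne rfl

theorem eq_zero [Finite α] (hf : IsQuadratic f) (h1 : ∀ τ, #(fixedIn M τ) = 1 → f τ = 0)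
    (h2 : ∀ τ, #(fixedIn M τ) = 2 → f τ = 0) (hM : 7 ≤ #M) (hτ : #(fixedIn M τ) = 3)
    (hfτ : f τ = 0) (σ : Perm α) : f σ = 0 := by
  cases nonempty_fintype α
  have hcard : 7 ≤ Fintype.card α := hM.trans (card_le_univ M)
  have h3 (ρ) (hρ : #(fixedIn M ρ) = 3) : f ρ = 0 :=
    (hf.apply_eq_of_card_fixedIn_eq_three h1 h2 hcard hρ hτ).trans hfτ
  have hne (ρ) : (fixedIn M ρ).Nonempty → f ρ = 0 := hf.eq_zero_of_nonempty h1 h2 h3 hcard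
  rcases (fixedIn M σ).eq_empty_or_nonempty with hσ | hσ
  · exact hf.eq_zero_of_fixedIn_eq_empty hM hne hσ
  · exact hne σ hσ

-- The cosets of the vectors `f ρ - f τ` modulo the direction of `A` form a quadratic function.
theorem mem_affineSubspace [Finite α] {k : Type*} [Ring k] [Module k V] (hf : IsQuadratic f)
    {A : AffineSubspace k V} (h1 : ∀ τ, #(fixedIn M τ) = 1 → f τ ∈ A)
    (h2 : ∀ τ, #(fixedIn M τ) = 2 → f τ ∈ A) (hM : 7 ≤ #M) (hτ : #(fixedIn M τ) = 3)
    (hfτ : f τ ∈ A) (σ : Perm α) : f σ ∈ A := by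
  have hmem (ρ) : A.direction.mkQ (f ρ - f τ) = 0 ↔ f ρ ∈ A := by
    rw [Submodule.mkQ_apply, Submodule.Quotient.mk_eq_zero, ← vsub_eq_sub,
      A.vsub_right_mem_direction_iff_mem hfτ]
  rw [← hmem]
  exact ((hf.sub_const (f τ)).map A.direction.mkQ.toAddMonoidHom).eq_zero
    (fun ρ hρ ↦ (hmem ρ).2 (h1 ρ hρ)) (fun ρ hρ ↦ (hmem ρ).2 (h2 ρ hρ)) hM hτ ((hmem τ).2 hfτ) σ

end IsQuadratic

end AllLevels

section Hits

open Equiv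

variable {α ι V : Type*} [DecidableEq α] [Fintype ι] {i j : ι → α}

/-- The number of prescribed values `i r ↦ j r` that `σ` takes; thus `Sk i j k` consists of the
permutations with `k` hits. -/
def hits (i j : ι → α) (σ : Perm α) : ℕ := #{r | σ (i r) = j r}

theorem card_fixedIn_image (hi : i.Injective) {π : Perm α} (hπ : ∀ r, π (i r) = j r)
    (τ : Perm α) : #(fixedIn (univ.image i) τ) = hits i j (π * τ) := by
  have h : fixedIn (univ.image i) τ = ({r | π (τ (i r)) = j r} : Finset ι).image i := by
    ext x
    simp only [mem_fixedIn, mem_image, mem_filter_univ, mem_univ, true_and, ← hπ,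
      π.injective.eq_iff]
    grind
  rw [h, card_image_of_injective _ hi]
  rfl

theorem exists_hits_eq [Fintype α] (hi : i.Injective) (hj : j.Injective) {k : ℕ}
    (hk : k ≤ Fintype.card ι) (hcard : k + 2 ≤ Fintype.card α) : ∃ σ, hits i j σ = k := by
  obtain ⟨π, hπ⟩ := Perm.exists_extending_pair i j hi hj
  obtain ⟨F, hF, rfl⟩ : ∃ F ⊆ univ.image i, #F = k := exists_subset_card_eq (by
    rwa [card_image_of_injective _ hi, card_univ])
  obtain ⟨τ, hτ⟩ := exists_fixedIn_eq hF hcard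
  exact ⟨π * τ, by rw [← card_fixedIn_image hi hπ, hτ]⟩

theorem IsQuadratic.mem_affineSubspace_of_hits [Finite α] {k : Type*} [Ring k] [AddCommGroup V]
    [Module k V] {f : Perm α → V} (hf : IsQuadratic f) (hi : i.Injective) (hj : j.Injective)
    (hι : 7 ≤ Fintype.card ι) {A : AffineSubspace k V} (h1 : ∀ σ, hits i j σ = 1 → f σ ∈ A)
    (h2 : ∀ σ, hits i j σ = 2 → f σ ∈ A) {τ : Perm α} (hτ : hits i j τ = 3) (hfτ : f τ ∈ A)
    (σ : Perm α) : f σ ∈ A := by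
  obtain ⟨π, hπ⟩ := Perm.exists_extending_pair i j hi hj
  have hcard := card_fixedIn_image hi hπ
  have h := (hf.mul_left π).mem_affineSubspace (M := univ.image i) (τ := π⁻¹ * τ)
    (fun ρ hρ ↦ h1 _ (hcard ρ ▸ hρ)) (fun ρ hρ ↦ h2 _ (hcard ρ ▸ hρ))
    (by rwa [card_image_of_injective _ hi]) (by rwa [hcard, mul_inv_cancel_left])
    (by rwa [mul_inv_cancel_left]) (π⁻¹ * σ)
  rwa [mul_inv_cancel_left] at h

end Hits

theorem isQuadratic_permMat2 {n : ℕ} : IsQuadratic (permMat2 (n := n)) :=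
  fun σ s t u hst hsu htu ↦ funext fun p ↦ funext fun q ↦
    isQuadratic_apply_apply
      (fun a b ↦ (if a = p.2 then (1 : ℝ) else 0) * (if b = q.2 then (1 : ℝ) else 0)) p.1 q.1
      σ s t u hst hsu htu

section QAP4

open Equiv

variable {n m : ℕ} {i j : Fin m → Fin n} {σ : Perm (Fin n)}

/-- The left-hand side of the QAP4 inequality, as a linear functional. -/
def qap4 (i j : Fin m → Fin n) : ((Fin n × Fin n) → (Fin n × Fin n) → ℝ) →ₗ[ℝ] ℝ where
  toFun Y := ∑ r : Fin m, Y (i r, j r) (i r, j r)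
    - ∑ r : Fin m, ∑ s : Fin m, if r < s then Y (i r, j r) (i s, j s) else 0
  map_add' Y Z := by
    simp only [Pi.add_apply, ← sum_filter, sum_add_distrib]
    ring
  map_smul' c Y := by
    simp only [Pi.smul_apply, smul_eq_mul, ← sum_filter, ← mul_sum, mul_sub, RingHom.id_apply]

theorem qap4_permMat2 (i j : Fin m → Fin n) (σ : Perm (Fin n)) :
    qap4 i j (permMat2 σ) = 1 - ((hits i j σ : ℝ) - 1) * (hits i j σ - 2) / 2 := by
  let u (r : Fin m) : ℝ := if σ (i r) = j r then 1 else 0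
  have hu (r) : u r * u r = u r := by simp [u]
  have hhits : (hits i j σ : ℝ) = ∑ r, u r := by simp [hits, u]
  have hsum := sum_mul_sum_self_eq u
  have hqap4 : qap4 i j (permMat2 σ) =
      ∑ r, u r * u r - ∑ r, ∑ s, if r < s then u r * u s else 0 := rfl
  simp only [hu, ← hhits] at hsum hqap4
  linarith

theorem qap4_permMat2_le_one : qap4 i j (permMat2 σ) ≤ 1 := by
  rw [qap4_permMat2]
  have h : (0 : ℝ) ≤ (hits i j σ - 1) * (hits i j σ - 2) := by
    rcases le_or_gt (hits i j σ) 1 with h | h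
    · have h : (hits i j σ : ℝ) ≤ 1 := mod_cast h
      nlinarith
    · have h : (2 : ℝ) ≤ hits i j σ := mod_cast h
      nlinarith
  linarith

theorem qap4_permMat2_of_mem (hσ : σ ∈ Sk i j 1 ∪ Sk i j 2) : qap4 i j (permMat2 σ) = 1 := by
  rw [qap4_permMat2]
  rcases hσ with hσ | hσ <;> rw [show hits i j σ = _ from hσ] <;> norm_num

theorem qap4_permMat2_of_hits_eq_three (hσ : hits i j σ = 3) :
    qap4 i j (permMat2 σ) = 0 := by
  rw [qap4_permMat2, hσ]
  norm_num

end QAP4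

section Face

variable {n m : ℕ} {i j : Fin m → Fin n}

theorem permMat2_notMem_affineSpan {τ : Equiv.Perm (Fin n)} (hτ : hits i j τ = 3) :
    permMat2 τ ∉ affineSpan ℝ (permMat2 '' (Sk i j 1 ∪ Sk i j 2)) := by
  have hface : Set.EqOn (qap4 i j).toAffineMap (AffineMap.const ℝ _ 1)
      (permMat2 '' (Sk i j 1 ∪ Sk i j 2)) := by
    rintro _ ⟨σ, hσ, rfl⟩
    exact qap4_permMat2_of_mem hσ
  intro h
  have hone : qap4 i j (permMat2 τ) = 1 := AffineMap.eqOn_affineSpan hface h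
  rw [qap4_permMat2_of_hits_eq_three hτ] at hone
  exact zero_ne_one hone

theorem affineSpan_range_permMat2 (hm : 7 ≤ m) (hi : i.Injective) (hj : j.Injective)
    {τ : Equiv.Perm (Fin n)} (hτ : hits i j τ = 3) :
    affineSpan ℝ (Set.range permMat2) =
      affineSpan ℝ (insert (permMat2 τ) (permMat2 '' (Sk i j 1 ∪ Sk i j 2))) := by
  refine le_antisymm (affineSpan_le.2 ?_) (affineSpan_mono ℝ ?_)
  · rintro _ ⟨σ, rfl⟩
    refine isQuadratic_permMat2.mem_affineSubspace_of_hits hi hj (by simpa) ?_ ?_ hτ ?_ σ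
    · exact fun ρ hρ ↦ subset_affineSpan ℝ _ (.inr ⟨ρ, .inl hρ, rfl⟩)
    · exact fun ρ hρ ↦ subset_affineSpan ℝ _ (.inr ⟨ρ, .inr hρ, rfl⟩)
    · exact subset_affineSpan ℝ _ (.inl rfl)
  · exact Set.insert_subset ⟨τ, rfl⟩ (Set.image_subset_range _ _)

end Face

theorem stmt9 {n m : ℕ} (hmn : m ≤ n) (hm : 7 ≤ m) (hn : 7 ≤ n)
    (i j : Fin m → Fin n) (hi : Function.Injective i) (hj : Function.Injective j) :
    (∀ Y ∈ convexHull ℝ (Set.range (permMat2 (n := n))),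
      (∑ r : Fin m, Y (i r, j r) (i r, j r)
        - ∑ r : Fin m, ∑ s : Fin m, if r < s then Y (i r, j r) (i s, j s) else 0) ≤ 1)
    ∧ Module.finrank ℝ (affineSpan ℝ (permMat2 '' (Sk i j 1 ∪ Sk i j 2))).direction + 1
        = Module.finrank ℝ (affineSpan ℝ (Set.range (permMat2 (n := n)))).direction := by
  constructor
  · have hvertex : Set.range permMat2 ⊆ {Y | qap4 i j Y ≤ 1} :=
      Set.range_subset_iff.2 fun _ ↦ qap4_permMat2_le_one
    exact convexHull_min hvertex (convex_halfSpace_le (qap4 i j).isLinear 1)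
  · have hexists {k : ℕ} (hk : k ≤ 3) : ∃ σ, hits i j σ = k :=
      exists_hits_eq hi hj (by rw [Fintype.card_fin]; omega) (by rw [Fintype.card_fin]; omega)
    obtain ⟨ρ, hρ⟩ := hexists (k := 1) (by omega)
    obtain ⟨τ, hτ⟩ := hexists le_rfl
    have hface : (permMat2 '' (Sk i j 1 ∪ Sk i j 2)).Nonempty := ⟨_, ρ, .inl hρ, rfl⟩
    rw [affineSpan_range_permMat2 hm hi hj hτ,
      finrank_direction_affineSpan_insert hface (permMat2_notMem_affineSpan hτ)]
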